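/- Let C ⇄ E ⇄ D be a split short exact sequence of stable ∞-categories, and suppose C and D carry weight structures such that π₀Map_E(i_D X, i_C Y) = 0 for all X ∈ D_{w≤0} and Y ∈ Σ C_{w≥0}. Then there exists a unique weight structure on E making all four functors weight-exact; its non-negative (resp. non-positive) part is the extension-closure of i_C(C_{w≥0}) ∪ i_D(D_{w≥0}) (resp. i_C(C_{w≤0}) ∪ i_D(D_{w≤0})). -/

import Mathlib

open CategoryTheory Limits Pretriangulated

universe v u

variable (C : Type u) [Category.{v} C] [HasZeroObject C] [Preadditive C]
  [HasShift C ℤ] [∀ n : ℤ, (shiftFunctor C n).Additive] [Pretriangulated C]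

/-- A weight structure on a stable (pretriangulated) category `C`: a pair of
Karoubi-closed full subcategories `le = C_{w≤0}` and `ge = C_{w≥0}` which are
semi-invariant under the translations, satisfy the orthogonality condition
`π₀Map(X, ΣY) = 0` for `X ∈ C_{w≤0}`, `Y ∈ C_{w≥0}`, and such that every object
admits a weight decomposition `w≤0 X → X → w≥1 X`. -/
structure WeightStructure where
  /-- the subcategory `C_{w≤0}` -/
  le : Set C
  /-- the subcategory `C_{w≥0}` -/
  ge : Set C
  le_iso : ∀ ⦃X Y : C⦄, (X ≅ Y) → le X → le Y
  ge_iso : ∀ ⦃X Y : C⦄, (X ≅ Y) → ge X → ge Y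
  le_retract : ∀ ⦃X Y : C⦄, le Y → (∃ (i : X ⟶ Y) (r : Y ⟶ X), i ≫ r = 𝟙 X) → le X
  ge_retract : ∀ ⦃X Y : C⦄, ge Y → (∃ (i : X ⟶ Y) (r : Y ⟶ X), i ≫ r = 𝟙 X) → ge X
  /-- `Ω C_{w≤0} ⊆ C_{w≤0}` -/
  le_shift : ∀ ⦃X : C⦄, le X → le (X⟦(-1 : ℤ)⟧)
  /-- `Σ C_{w≥0} ⊆ C_{w≥0}` -/
  ge_shift : ∀ ⦃X : C⦄, ge X → ge (X⟦(1 : ℤ)⟧)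
  /-- orthogonality: `π₀Map(X, ΣY) = 0` for `X ∈ C_{w≤0}`, `Y ∈ C_{w≥0}` -/
  orth : ∀ ⦃X Y : C⦄, le X → ge Y → ∀ f : X ⟶ Y⟦(1 : ℤ)⟧, f = 0
  /-- weight decompositions -/
  decomp : ∀ X : C, ∃ (A B : C) (f : A ⟶ X) (g : X ⟶ B) (h : B ⟶ A⟦(1 : ℤ)⟧),
    (Triangle.mk f g h ∈ distTriang C) ∧ le A ∧ ∃ B₀, ge B₀ ∧ Nonempty (B ≅ B₀⟦(1 : ℤ)⟧)

variable {C}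

/-- The heart `Hw = C_{w≥0} ∩ C_{w≤0}` of a weight structure. -/
def WeightStructure.heart (w : WeightStructure C) : Set C := w.le ∩ w.ge

/-- A weight structure is bounded if every object lies in `Σⁿ C_{w≤0}` and in
`Ωⁿ C_{w≥0}` for some `n`. -/
def WeightStructure.IsBounded (w : WeightStructure C) : Prop :=
  ∀ X : C, ∃ n : ℤ, w.le (X⟦(-n)⟧) ∧ w.ge (X⟦n⟧)

variable (C) in
/-- A t-structure on a stable (pretriangulated) category `C`, in homological
(connective) indexing: `ge = C_{t≥0}` is closed under suspension, `le = C_{t≤0}`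
under loops, maps from `C_{t≥1}` to `C_{t≤0}` vanish on `π₀Map`, and every object
admits a truncation triangle `τ≥0 X → X → τ≤-1 X`. -/
structure TStructure where
  /-- the subcategory `C_{t≤0}` -/
  le : Set C
  /-- the subcategory `C_{t≥0}` -/
  ge : Set C
  le_iso : ∀ ⦃X Y : C⦄, (X ≅ Y) → le X → le Y
  ge_iso : ∀ ⦃X Y : C⦄, (X ≅ Y) → ge X → ge Y
  /-- `Ω C_{t≤0} ⊆ C_{t≤0}` -/
  le_shift : ∀ ⦃X : C⦄, le X → le (X⟦(-1 : ℤ)⟧)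
  /-- `Σ C_{t≥0} ⊆ C_{t≥0}` -/
  ge_shift : ∀ ⦃X : C⦄, ge X → ge (X⟦(1 : ℤ)⟧)
  /-- orthogonality: `π₀Map(ΣY, X) = 0` for `Y ∈ C_{t≥0}`, `X ∈ C_{t≤0}` -/
  orth : ∀ ⦃X Y : C⦄, le X → ge Y → ∀ f : Y⟦(1 : ℤ)⟧ ⟶ X, f = 0
  /-- truncation triangles -/
  trunc : ∀ X : C, ∃ (A B : C) (f : A ⟶ X) (g : X ⟶ B) (h : B ⟶ A⟦(1 : ℤ)⟧),
    (Triangle.mk f g h ∈ distTriang C) ∧ ge A ∧ ∃ B₀, le B₀ ∧ Nonempty (B ≅ B₀⟦(-1 : ℤ)⟧)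

/-- The heart `Ht = C_{t≥0} ∩ C_{t≤0}` of a t-structure. -/
def TStructure.heart (t : TStructure C) : Set C := t.le ∩ t.ge

variable (C) in
/-- A functor between stable categories with weight structures is weight-exact if it
preserves both the non-positive and the non-negative classes. -/
def WeightExact {D : Type*} [Category D] (F : C ⥤ D)
    (wC : WeightStructure C)
    (wD : Set D × Set D) : Prop :=
  (∀ X : C, wC.le X → F.obj X ∈ wD.1) ∧ (∀ X : C, wC.ge X → F.obj X ∈ wD.2)

variable (C) in
/-- The extension-closure of a class of objects `S` in a stable category: the smallest
class containing `S` which is closed under isomorphisms and extensions (distinguished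
triangles). -/
inductive ExtClosure (S : Set C) : C → Prop
  | of {X : C} : X ∈ S → ExtClosure S X
  | iso {X Y : C} : (X ≅ Y) → ExtClosure S X → ExtClosure S Y
  | ext {A X B : C} (f : A ⟶ X) (g : X ⟶ B) (h : B ⟶ A⟦(1 : ℤ)⟧) :
      (Triangle.mk f g h ∈ distTriang C) → ExtClosure S A → ExtClosure S B →
      ExtClosure S X

section ExactPairs

variable {𝒜 : Type*} [Category* 𝒜] [HasZeroObject 𝒜] [Preadditive 𝒜]
  [HasShift 𝒜 ℤ] [∀ n : ℤ, (shiftFunctor 𝒜 n).Additive] [Pretriangulated 𝒜]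
  {ℬ : Type*} [Category* ℬ] [HasZeroObject ℬ] [Preadditive ℬ]
  [HasShift ℬ ℤ] [∀ n : ℤ, (shiftFunctor ℬ n).Additive] [Pretriangulated ℬ]

/-- Two composable morphisms form an exact pair if they are the first two morphisms of a
distinguished triangle. -/
def ExactPair {X Y Z : 𝒜} (f : X ⟶ Y) (g : Y ⟶ Z) : Prop :=
  ∃ h : Z ⟶ X⟦(1 : ℤ)⟧, Triangle.mk f g h ∈ distTriang 𝒜

namespace ExactPair

lemma exists_cone {X Y : 𝒜} (f : X ⟶ Y) : ∃ (Z : 𝒜) (g : Y ⟶ Z), ExactPair f g := by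
  obtain ⟨Z, g, h, H⟩ := distinguished_cocone_triangle f
  exact ⟨Z, g, h, H⟩

lemma exists_fiber {Y Z : 𝒜} (g : Y ⟶ Z) : ∃ (X : 𝒜) (f : X ⟶ Y), ExactPair f g := by
  obtain ⟨X, f, h, H⟩ := distinguished_cocone_triangle₁ g
  exact ⟨X, f, h, H⟩

lemma map (F : 𝒜 ⥤ ℬ) [F.CommShift ℤ] [F.IsTriangulated] {X Y Z : 𝒜} {f : X ⟶ Y} {g : Y ⟶ Z}
    (H : ExactPair f g) : ExactPair (F.map f) (F.map g) := by
  obtain ⟨h, H⟩ := H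
  exact ⟨_, F.map_distinguished _ H⟩

lemma of_iso {X Y Z X' Y' Z' : 𝒜} {f : X ⟶ Y} {g : Y ⟶ Z} {f' : X' ⟶ Y'} {g' : Y' ⟶ Z'}
    (H : ExactPair f g) (e₁ : X ≅ X') (e₂ : Y ≅ Y') (e₃ : Z ≅ Z')
    (h₁ : f ≫ e₂.hom = e₁.hom ≫ f') (h₂ : g ≫ e₃.hom = e₂.hom ≫ g') : ExactPair f' g' := by
  obtain ⟨h, H⟩ := H
  refine ⟨e₃.inv ≫ h ≫ e₁.hom⟦1⟧', isomorphic_distinguished _ H _ (Iso.symm ?_)⟩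
  exact Triangle.isoMk _ _ e₁ e₂ e₃ h₁ h₂ (e₃.hom_inv_id_assoc _).symm

lemma cone_iso {X Y Z X' Y' Z' : 𝒜} {f : X ⟶ Y} {g : Y ⟶ Z} {f' : X' ⟶ Y'} {g' : Y' ⟶ Z'}
    (H : ExactPair f g) (H' : ExactPair f' g') (e₁ : X ≅ X') (e₂ : Y ≅ Y')
    (comm : f ≫ e₂.hom = e₁.hom ≫ f') : Nonempty (Z ≅ Z') := by
  obtain ⟨h, H⟩ := H
  obtain ⟨h', H'⟩ := H'
  exact ⟨Triangle.π₃.mapIso (isoTriangleOfIso₁₂ _ _ H H' e₁ e₂ comm)⟩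

lemma fiber_iso {X Y Z X' Y' Z' : 𝒜} {f : X ⟶ Y} {g : Y ⟶ Z} {f' : X' ⟶ Y'} {g' : Y' ⟶ Z'}
    (H : ExactPair f g) (H' : ExactPair f' g') (e₂ : Y ≅ Y') (e₃ : Z ≅ Z')
    (comm : g ≫ e₃.hom = e₂.hom ≫ g') : Nonempty (X ≅ X') := by
  obtain ⟨h, H⟩ := H
  obtain ⟨h', H'⟩ := H'
  obtain ⟨(a : X ⟶ X'), ha, ha'⟩ :=
    complete_distinguished_triangle_morphism₁ _ _ H H' e₂.hom e₃.hom comm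
  let φ : Triangle.mk f g h ⟶ Triangle.mk f' g' h' :=
    { hom₁ := a, hom₂ := e₂.hom, hom₃ := e₃.hom, comm₁ := ha, comm₂ := comm, comm₃ := ha' }
  have : IsIso a := isIso₁_of_isIso₂₃ φ H H' (inferInstanceAs (IsIso e₂.hom))
    (inferInstanceAs (IsIso e₃.hom))
  exact ⟨asIso a⟩

lemma isIso_of_isZero {X Y Z : 𝒜} {f : X ⟶ Y} {g : Y ⟶ Z} (H : ExactPair f g)
    (hX : IsZero X) : IsIso g := by
  obtain ⟨h, H⟩ := H
  exact (Triangle.isZero₁_iff_isIso₂ _ H).1 hX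

lemma isZero_of_isIso {X Y Z : 𝒜} {f : X ⟶ Y} {g : Y ⟶ Z} (H : ExactPair f g)
    [IsIso f] : IsZero Z := by
  obtain ⟨h, H⟩ := H
  exact (Triangle.isZero₃_iff_isIso₁ _ H).2 (inferInstanceAs (IsIso f))

lemma eq_zero_of_source {X Y Z W : 𝒜} {f : X ⟶ Y} {g : Y ⟶ Z} (H : ExactPair f g)
    (hX : ∀ k : X ⟶ W, k = 0) (hZ : ∀ k : Z ⟶ W, k = 0) (k : Y ⟶ W) : k = 0 := by
  obtain ⟨h, H⟩ := H
  obtain ⟨l, hl⟩ := Triangle.yoneda_exact₂ _ H k (hX _)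
  exact hl.trans ((congrArg _ (hZ l)).trans comp_zero)

lemma eq_zero_of_target {X Y Z W : 𝒜} {f : X ⟶ Y} {g : Y ⟶ Z} (H : ExactPair f g)
    (hX : ∀ k : W ⟶ X, k = 0) (hZ : ∀ k : W ⟶ Z, k = 0) (k : W ⟶ Y) : k = 0 := by
  obtain ⟨h, H⟩ := H
  obtain ⟨l, hl⟩ := Triangle.coyoneda_exact₂ _ H k (hZ _)
  exact hl.trans ((congrArg (· ≫ f) (hX l)).trans zero_comp)

lemma shift {X Y Z : 𝒜} {f : X ⟶ Y} {g : Y ⟶ Z} (H : ExactPair f g) :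
    ExactPair (f⟦(1 : ℤ)⟧') (g⟦(1 : ℤ)⟧') := by
  obtain ⟨h, H⟩ := H
  have := Triangle.shift_distinguished _ H 1
  refine of_iso (f := (1 : ℤ).negOnePow • f⟦(1 : ℤ)⟧') (g := (1 : ℤ).negOnePow • g⟦(1 : ℤ)⟧')
    ⟨_, this⟩ (Iso.refl _) ((-1 : ℤˣ) • Iso.refl _) (Iso.refl _) ?_ ?_ <;> simp

lemma exists_lift {X Y Z W : 𝒜} {f : X ⟶ Y} {g : Y ⟶ Z} (H : ExactPair f g)
    (hW : ∀ k : W ⟶ X⟦(1 : ℤ)⟧, k = 0) (k : W ⟶ Z) : ∃ l : W ⟶ Y, l ≫ g = k := by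
  obtain ⟨h, H⟩ := H
  obtain ⟨l, hl⟩ := Triangle.coyoneda_exact₃ _ H k (hW _)
  exact ⟨l, hl.symm⟩

lemma exists_retraction_of_zero {X Y Z : 𝒜} {f : X ⟶ Y} {g : Y ⟶ Z} (H : ExactPair f g)
    (hf : f = 0) : ∃ r : Z ⟶ Y, g ≫ r = 𝟙 Y := by
  obtain ⟨h, H⟩ := H
  obtain ⟨l, hl⟩ := Triangle.yoneda_exact₂ _ H (𝟙 Y) 
    ((Category.comp_id f).trans hf)
  exact ⟨l, hl.symm⟩

lemma exists_section_of_zero {X Y Z : 𝒜} {f : X ⟶ Y} {g : Y ⟶ Z} (H : ExactPair f g)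
    (hg : g = 0) : ∃ s : Y ⟶ X, s ≫ f = 𝟙 Y := by
  obtain ⟨h, H⟩ := H
  obtain ⟨l, hl⟩ := Triangle.coyoneda_exact₂ _ H (𝟙 Y) 
    ((Category.id_comp g).trans hg)
  exact ⟨l, hl.symm⟩

/-- If `G` is a fully faithful left adjoint of `R`, then completing `G P ⟶ G (R X) ⟶ X` to a
triangle and applying `R` recovers the cone of `P ⟶ R X`. -/
lemma rightAdjoint_cone_iso {G : 𝒜 ⥤ ℬ} {R : ℬ ⥤ 𝒜} (adj : G ⊣ R) [G.Full] [G.Faithful]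
    [R.CommShift ℤ] [R.IsTriangulated] {P S : 𝒜} {X Z : ℬ} {a : P ⟶ R.obj X} {b : R.obj X ⟶ S}
    {q : X ⟶ Z} (H : ExactPair (G.map a ≫ adj.counit.app X) q) (Hab : ExactPair a b) :
    Nonempty (R.obj Z ≅ S) := by
  refine (H.map R).cone_iso Hab (asIso (adj.unit.app P)).symm (Iso.refl _) ?_
  simp [IsIso.eq_inv_comp]

/-- If `F K = 0` and `q` has fibre `K`, then the fibre of `F (q ≫ p)` is that of `F p`. -/
lemma fiber_iso_of_isIso_left (F : 𝒜 ⥤ ℬ) [F.CommShift ℤ] [F.IsTriangulated]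
    {X Z B A K : 𝒜} {q : X ⟶ Z} {p : Z ⟶ B} {f : A ⟶ X} {k : K ⟶ Z}
    (H : ExactPair f (q ≫ p)) (Hp : ExactPair k p) (hq : IsIso (F.map q)) :
    Nonempty (F.obj A ≅ F.obj K) :=
  (H.map F).fiber_iso (Hp.map F) (asIso (F.map q)) (Iso.refl _) (by simp)

lemma fiber_iso_of_isIso_right (F : 𝒜 ⥤ ℬ) [F.CommShift ℤ] [F.IsTriangulated]
    {X Z B A K : 𝒜} {q : X ⟶ Z} {p : Z ⟶ B} {f : A ⟶ X} {k : K ⟶ X}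
    (H : ExactPair f (q ≫ p)) (Hq : ExactPair k q) (hp : IsIso (F.map p)) :
    Nonempty (F.obj A ≅ F.obj K) :=
  (H.map F).fiber_iso (Hq.map F) (Iso.refl _) (asIso (F.map p)).symm (by simp)

end ExactPair

namespace WeightStructure

variable (w : WeightStructure 𝒜)

lemma exists_decomp (X : 𝒜) : ∃ (A B B₀ : 𝒜) (f : A ⟶ X) (g : X ⟶ B),
    ExactPair f g ∧ w.le A ∧ w.ge B₀ ∧ Nonempty (B ≅ B₀⟦(1 : ℤ)⟧) := by
  obtain ⟨A, B, f, g, h, H, hA, B₀, hB₀, e⟩ := w.decomp X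
  exact ⟨A, B, B₀, f, g, ⟨h, H⟩, hA, hB₀, e⟩

lemma le_of_orth {X : 𝒜} (hX : ∀ Y, w.ge Y → ∀ f : X ⟶ Y⟦(1 : ℤ)⟧, f = 0) : w.le X := by
  obtain ⟨A, B, B₀, f, g, H, hA, hB₀, ⟨e⟩⟩ := w.exists_decomp X
  have hg : g = 0 := by
    rw [← cancel_mono e.hom, hX _ hB₀ (g ≫ e.hom), zero_comp]
  obtain ⟨s, hs⟩ := H.exists_section_of_zero hg
  exact w.le_retract hA ⟨s, f, hs⟩

lemma ge_of_orth {Y : 𝒜} (hY : ∀ X, w.le X → ∀ f : X ⟶ Y⟦(1 : ℤ)⟧, f = 0) : w.ge Y := by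
  obtain ⟨A, B, B₀, f, g, H, hA, hB₀, ⟨e⟩⟩ := w.exists_decomp (Y⟦(1 : ℤ)⟧)
  obtain ⟨r, hr⟩ := H.exists_retraction_of_zero (hY _ hA f)
  refine w.ge_retract hB₀ ⟨(shiftFunctor 𝒜 (1 : ℤ)).preimage (g ≫ e.hom),
    (shiftFunctor 𝒜 (1 : ℤ)).preimage (e.inv ≫ r), ?_⟩
  apply (shiftFunctor 𝒜 (1 : ℤ)).map_injective
  simp [hr]

lemma le_of_isZero {X : 𝒜} (hX : IsZero X) : w.le X :=
  w.le_of_orth fun _ _ f => hX.eq_of_src f 0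

lemma ge_of_isZero {X : 𝒜} (hX : IsZero X) : w.ge X :=
  w.ge_of_orth fun _ _ f => ((shiftFunctor 𝒜 (1 : ℤ)).map_isZero hX).eq_of_tgt f 0

lemma le_of_extClosure {S : Set 𝒜} (hS : ∀ X ∈ S, w.le X) {X : 𝒜} (hX : ExtClosure 𝒜 S X) :
    w.le X := by
  induction hX with
  | of h => exact hS _ h
  | iso e _ h => exact w.le_iso e h
  | ext f g h H _ _ hA hB =>
    exact w.le_of_orth fun Y hY =>
      ExactPair.eq_zero_of_source ⟨h, H⟩ (w.orth hA hY) (w.orth hB hY)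

lemma ge_of_extClosure {S : Set 𝒜} (hS : ∀ X ∈ S, w.ge X) {X : 𝒜} (hX : ExtClosure 𝒜 S X) :
    w.ge X := by
  induction hX with
  | of h => exact hS _ h
  | iso e _ h => exact w.ge_iso e h
  | ext f g h H _ _ hA hB =>
    exact w.ge_of_orth fun Y hY =>
      (ExactPair.shift ⟨h, H⟩).eq_zero_of_target (w.orth hY hA) (w.orth hY hB)

end WeightStructure

end ExactPairs

lemma TStructure.eq_zero_of_ge_of_le {𝒜 : Type*} [Category* 𝒜] [HasZeroObject 𝒜] [Preadditive 𝒜]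
    [HasShift 𝒜 ℤ] [∀ n : ℤ, (shiftFunctor 𝒜 n).Additive] [Pretriangulated 𝒜]
    (t : TStructure 𝒜) {X Y : 𝒜} (hX : t.ge X) (hY : t.le Y) (f : X ⟶ Y⟦(-1 : ℤ)⟧) : f = 0 := by
  apply (shiftFunctor 𝒜 (1 : ℤ)).map_injective
  apply (cancel_mono ((shiftEquiv 𝒜 (1 : ℤ)).counitIso.app Y).hom).1
  exact (t.orth hY hX _).trans (by rw [Functor.map_zero]; exact zero_comp.symm)

section Orthogonal

variable {𝒞 𝒟 ℰ : Type*} [Category* 𝒞] [Category* 𝒟] [Category* ℰ] [Preadditive ℰ]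
  {iC : 𝒞 ⥤ ℰ} {iD : 𝒟 ⥤ ℰ}
  (hCD : ∀ (c : 𝒞) (d : 𝒟) (f : iC.obj c ⟶ iD.obj d), f = 0)

include hCD

lemma isZero_rightAdjoint_obj [Preadditive 𝒞] {LC : ℰ ⥤ 𝒞} (adjC : iC ⊣ LC) (d : 𝒟) :
    IsZero (LC.obj (iD.obj d)) := by
  rw [IsZero.iff_id_eq_zero]
  exact (adjC.homEquiv _ _).symm.injective ((hCD _ _ _).trans (hCD _ _ _).symm)

lemma isZero_leftAdjoint_obj [Preadditive 𝒟] {LD : ℰ ⥤ 𝒟} (adjD : LD ⊣ iD) (c : 𝒞) :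
    IsZero (LD.obj (iC.obj c)) := by
  rw [IsZero.iff_id_eq_zero]
  exact (adjD.homEquiv _ _).injective ((hCD _ _ _).trans (hCD _ _ _).symm)

end Orthogonal

section Gluing

variable {𝒞 : Type*} [Category* 𝒞] [HasZeroObject 𝒞] [Preadditive 𝒞]
  [HasShift 𝒞 ℤ] [∀ n : ℤ, (shiftFunctor 𝒞 n).Additive] [Pretriangulated 𝒞]
  {𝒟 : Type*} [Category* 𝒟] [HasZeroObject 𝒟] [Preadditive 𝒟]
  [HasShift 𝒟 ℤ] [∀ n : ℤ, (shiftFunctor 𝒟 n).Additive] [Pretriangulated 𝒟]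
  {ℰ : Type*} [Category* ℰ] [HasZeroObject ℰ] [Preadditive ℰ]
  [HasShift ℰ ℤ] [∀ n : ℤ, (shiftFunctor ℰ n).Additive] [Pretriangulated ℰ]
  {iC : 𝒞 ⥤ ℰ} {LC : ℰ ⥤ 𝒞} {LD : ℰ ⥤ 𝒟} {iD : 𝒟 ⥤ ℰ}
  [LC.CommShift ℤ] [LC.IsTriangulated] [LD.CommShift ℤ] [LD.IsTriangulated]
  (adjC : iC ⊣ LC) (adjD : LD ⊣ iD)
  (hCD : ∀ (c : 𝒞) (d : 𝒟) (f : iC.obj c ⟶ iD.obj d), f = 0)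

variable [iC.Full] [iC.Faithful] [iD.Full] [iD.Faithful]

include hCD in
/-- The gluing triangle `iC (LC X) ⟶ X ⟶ iD (LD X)`. -/
lemma exactPair_counit_unit
    (hess : ∀ Y : ℰ, (∀ (c : 𝒞) (f : iC.obj c ⟶ Y), f = 0) → iD.essImage Y) (X : ℰ) :
    ExactPair (adjC.counit.app X) (adjD.unit.app X) := by
  obtain ⟨W, (g : X ⟶ W), H⟩ := ExactPair.exists_cone (adjC.counit.app X)
  have hW : IsZero (LC.obj W) := (H.map LC).isZero_of_isIso
  have hW' : iD.essImage W := hess W fun c f =>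
    (adjC.homEquiv _ _).injective (hW.eq_of_tgt _ _)
  have : IsIso (adjD.unit.app W) := adjD.isIso_unit_app_of_iso hW'.getIso.symm
  have : IsIso (LD.map g) := (H.map LD).isIso_of_isZero (isZero_leftAdjoint_obj hCD adjD _)
  refine H.of_iso (Iso.refl _) (Iso.refl _)
    (asIso (adjD.unit.app W) ≪≫ (asIso (iD.map (LD.map g))).symm) (by simp) ?_
  change g ≫ adjD.unit.app W ≫ inv (iD.map (LD.map g)) = 𝟙 X ≫ adjD.unit.app X
  rw [Category.id_comp, ← Category.assoc, IsIso.comp_inv_eq]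
  exact (adjD.unit_naturality g).symm

include hCD adjD in
/-- Gluing a triangle `P ⟶ LC X ⟶ S` with a triangle `iD Q ⟶ Z ⟶ B` on the cone `Z` of
`iC P ⟶ X`. -/
lemma exists_glued_fiber {X Z B : ℰ} {P S : 𝒞} {Q : 𝒟} {a : P ⟶ LC.obj X} {b : LC.obj X ⟶ S}
    (Hab : ExactPair a b) {q : X ⟶ Z} (Hq : ExactPair (iC.map a ≫ adjC.counit.app X) q)
    {φ : iD.obj Q ⟶ Z} {p : Z ⟶ B} (Hp : ExactPair φ p) :
    ∃ (A : ℰ) (f : A ⟶ X), ExactPair f (q ≫ p) ∧ Nonempty (LC.obj A ≅ P) ∧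
      Nonempty (LD.obj A ≅ Q) ∧ Nonempty (LC.obj B ≅ S) := by
  have hp : IsIso (LC.map p) :=
    (Hp.map LC).isIso_of_isZero (isZero_rightAdjoint_obj hCD adjC _)
  have hq : IsIso (LD.map q) :=
    (Hq.map LD).isIso_of_isZero (isZero_leftAdjoint_obj hCD adjD _)
  obtain ⟨A, f, Hf⟩ := ExactPair.exists_fiber (q ≫ p)
  obtain ⟨e₁⟩ := Hf.fiber_iso_of_isIso_right LC Hq hp
  obtain ⟨e₂⟩ := Hf.fiber_iso_of_isIso_left LD Hp hq
  obtain ⟨e₃⟩ := Hq.rightAdjoint_cone_iso adjC Hab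
  exact ⟨A, f, Hf, ⟨e₁ ≪≫ (asIso (adjC.unit.app P)).symm⟩,
    ⟨e₂ ≪≫ asIso (adjD.counit.app Q)⟩, ⟨(asIso (LC.map p)).symm ≪≫ e₃⟩⟩

include adjC adjD hCD in
/-- The glued weight structure. -/
lemma exists_glued_weightStructure [iC.CommShift ℤ] [iD.CommShift ℤ]
    (hess : ∀ Y : ℰ, (∀ (c : 𝒞) (f : iC.obj c ⟶ Y), f = 0) → iD.essImage Y)
    (wC : WeightStructure 𝒞) (wD : WeightStructure 𝒟)
    (hw : ∀ (X : 𝒟) (Y : 𝒞), wD.le X → wC.ge Y →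
      ∀ f : iD.obj X ⟶ (iC.obj Y)⟦(1 : ℤ)⟧, f = 0) :
    ∃ w : WeightStructure ℰ,
      (∀ X, w.le X ↔ wC.le (LC.obj X) ∧ wD.le (LD.obj X)) ∧
      (∀ X, w.ge X ↔ wC.ge (LC.obj X) ∧ wD.ge (LD.obj X)) := by
  have tri := exactPair_counit_unit adjC adjD hCD hess
  have isoC (Y : 𝒞) : (iC.obj Y)⟦(1 : ℤ)⟧ ≅ iC.obj (Y⟦(1 : ℤ)⟧) :=
    ((iC.commShiftIso (1 : ℤ)).app Y).symm
  have isoD (Y : 𝒟) : (iD.obj Y)⟦(1 : ℤ)⟧ ≅ iD.obj (Y⟦(1 : ℤ)⟧) :=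
    ((iD.commShiftIso (1 : ℤ)).app Y).symm
  refine ⟨{
    le := {X | wC.le (LC.obj X) ∧ wD.le (LD.obj X)}
    ge := {X | wC.ge (LC.obj X) ∧ wD.ge (LD.obj X)}
    le_iso := fun X Y e h => ⟨wC.le_iso (LC.mapIso e) h.1, wD.le_iso (LD.mapIso e) h.2⟩
    ge_iso := fun X Y e h => ⟨wC.ge_iso (LC.mapIso e) h.1, wD.ge_iso (LD.mapIso e) h.2⟩
    le_retract := ?_
    ge_retract := ?_
    le_shift := fun X h => ⟨wC.le_iso ((LC.commShiftIso (-1 : ℤ)).app X).symm (wC.le_shift h.1),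
      wD.le_iso ((LD.commShiftIso (-1 : ℤ)).app X).symm (wD.le_shift h.2)⟩
    ge_shift := fun X h => ⟨wC.ge_iso ((LC.commShiftIso (1 : ℤ)).app X).symm (wC.ge_shift h.1),
      wD.ge_iso ((LD.commShiftIso (1 : ℤ)).app X).symm (wD.ge_shift h.2)⟩
    orth := ?_
    decomp := ?_ }, fun X => Iff.rfl, fun X => Iff.rfl⟩
  · rintro X Y ⟨h₁, h₂⟩ ⟨i, r, h⟩
    exact ⟨wC.le_retract h₁ ⟨LC.map i, LC.map r, by simp [← Functor.map_comp, h]⟩,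
      wD.le_retract h₂ ⟨LD.map i, LD.map r, by simp [← Functor.map_comp, h]⟩⟩
  · rintro X Y ⟨h₁, h₂⟩ ⟨i, r, h⟩
    exact ⟨wC.ge_retract h₁ ⟨LC.map i, LC.map r, by simp [← Functor.map_comp, h]⟩,
      wD.ge_retract h₂ ⟨LD.map i, LD.map r, by simp [← Functor.map_comp, h]⟩⟩
  · rintro X Y ⟨hX₁, hX₂⟩ ⟨hY₁, hY₂⟩
    refine (tri X).eq_zero_of_source ?_ ?_
    · refine (tri Y).shift.eq_zero_of_target (fun k => ?_) (fun k => ?_)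
      · rw [← cancel_mono (isoC _).hom, zero_comp, ← iC.map_preimage (k ≫ (isoC _).hom),
          wC.orth hX₁ hY₁ (iC.preimage _), iC.map_zero]
      · rw [← cancel_mono (isoD _).hom, hCD _ _ (k ≫ (isoD _).hom), zero_comp]
    · refine (tri Y).shift.eq_zero_of_target (hw _ _ hX₂ hY₁) (fun k => ?_)
      rw [← cancel_mono (isoD _).hom, zero_comp, ← iD.map_preimage (k ≫ (isoD _).hom),
          wD.orth hX₂ hY₂ (iD.preimage _), iD.map_zero]
  · intro X
    obtain ⟨P, S, S₀, a, b, Hab, hP, hS₀, ⟨eS⟩⟩ := wC.exists_decomp (LC.obj X)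
    obtain ⟨Z, q, Hq⟩ := ExactPair.exists_cone (iC.map a ≫ adjC.counit.app X)
    obtain ⟨eZ⟩ := Hq.rightAdjoint_cone_iso adjC Hab
    obtain ⟨Q, T, T₀, α, β, Hαβ, hQ, hT₀, ⟨eT⟩⟩ := wD.exists_decomp (LD.obj Z)
    have hZ : wC.ge (LC.obj Z) := wC.ge_iso (eZ ≪≫ eS).symm (wC.ge_shift hS₀)
    obtain ⟨(φ : iD.obj Q ⟶ Z), hφ⟩ := (tri Z).exists_lift (hw _ _ hQ hZ) (iD.map α)
    obtain ⟨B, p, Hp⟩ := ExactPair.exists_cone φ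
    obtain ⟨A, f, Hf, ⟨e₁⟩, ⟨e₂⟩, ⟨e₃⟩⟩ := exists_glued_fiber adjC adjD hCD Hab Hq Hp
    have hφ' : LD.map φ = adjD.counit.app Q ≫ α := by
      refine Eq.trans ?_ (adjD.counit_naturality α)
      rw [← hφ]
      exact ((LD.map_comp_assoc _ _ _).trans (by simp)).symm
    obtain ⟨e₄⟩ := (Hp.map LD).cone_iso Hαβ (asIso (adjD.counit.app Q)) (Iso.refl _)
      (by simp [hφ'])
    obtain ⟨h, Hh⟩ := Hf
    refine ⟨A, B, f, q ≫ p, h, Hh, ⟨wC.le_iso e₁.symm hP, wD.le_iso e₂.symm hQ⟩,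
      B⟦(-1 : ℤ)⟧, ⟨wC.ge_iso ?_ hS₀, wD.ge_iso ?_ hT₀⟩,
      ⟨((shiftEquiv ℰ (1 : ℤ)).counitIso.app B).symm⟩⟩
    · exact (shiftEquiv 𝒞 (1 : ℤ)).unitIso.app S₀ ≪≫
        (shiftFunctor 𝒞 (-1 : ℤ)).mapIso (eS.symm ≪≫ e₃.symm) ≪≫
          ((LC.commShiftIso (-1 : ℤ)).app B).symm
    · exact (shiftEquiv 𝒟 (1 : ℤ)).unitIso.app T₀ ≪≫
        (shiftFunctor 𝒟 (-1 : ℤ)).mapIso (eT.symm ≪≫ e₄.symm) ≪≫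
          ((LD.commShiftIso (-1 : ℤ)).app B).symm

include adjC adjD hCD in
/-- The t-structure glued along a recollement. -/
lemma exists_glued_tStructure
    (hess : ∀ Y : ℰ, (∀ (c : 𝒞) (f : iC.obj c ⟶ Y), f = 0) → iD.essImage Y)
    {RD : ℰ ⥤ 𝒟} (adjR : iD ⊣ RD) [RD.CommShift ℤ] [RD.IsTriangulated]
    (tC : TStructure 𝒞) (tD : TStructure 𝒟) :
    ∃ t : TStructure ℰ, ∀ X, t.ge X ↔ tC.ge (LC.obj X) ∧ tD.ge (LD.obj X) := by
  have tri := exactPair_counit_unit adjC adjD hCD hess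
  have shift_ge : ∀ X : ℰ, tC.ge (LC.obj X) ∧ tD.ge (LD.obj X) →
      tC.ge (LC.obj (X⟦(1 : ℤ)⟧)) ∧ tD.ge (LD.obj (X⟦(1 : ℤ)⟧)) := fun X h =>
    ⟨tC.ge_iso ((LC.commShiftIso (1 : ℤ)).app X).symm (tC.ge_shift h.1),
      tD.ge_iso ((LD.commShiftIso (1 : ℤ)).app X).symm (tD.ge_shift h.2)⟩
  refine ⟨{
    le := {X | ∀ Y : ℰ, tC.ge (LC.obj Y) ∧ tD.ge (LD.obj Y) → ∀ f : Y⟦(1 : ℤ)⟧ ⟶ X, f = 0}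
    ge := {X | tC.ge (LC.obj X) ∧ tD.ge (LD.obj X)}
    le_iso := ?_
    ge_iso := fun X Y e h => ⟨tC.ge_iso (LC.mapIso e) h.1, tD.ge_iso (LD.mapIso e) h.2⟩
    le_shift := ?_
    ge_shift := shift_ge
    orth := fun X Y hX hY => hX Y hY
    trunc := ?_ }, fun X => Iff.rfl⟩
  · intro X X' e h Y hY f
    rw [← cancel_mono e.inv, h Y hY (f ≫ e.inv), zero_comp]
  · intro X h Y hY f
    apply (shiftFunctor ℰ (1 : ℤ)).map_injective
    apply (cancel_mono ((shiftEquiv ℰ (1 : ℤ)).counitIso.app X).hom).1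
    exact (h _ (shift_ge _ hY) _).trans (by rw [Functor.map_zero]; exact zero_comp.symm)
  · intro X
    obtain ⟨P, S, a, b, _, Hab, hP, S₀, hS₀, ⟨eS⟩⟩ := tC.trunc (LC.obj X)
    replace Hab : ExactPair a b := ⟨_, Hab⟩
    obtain ⟨Z, q, Hq⟩ := ExactPair.exists_cone (iC.map a ≫ adjC.counit.app X)
    obtain ⟨Q, T, α, β, _, Hαβ, hQ, T₀, hT₀, ⟨eT⟩⟩ := tD.trunc (RD.obj Z)
    replace Hαβ : ExactPair α β := ⟨_, Hαβ⟩
    obtain ⟨B, p, Hp⟩ := ExactPair.exists_cone (iD.map α ≫ adjR.counit.app Z)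
    obtain ⟨A, f, ⟨h, Hh⟩, ⟨e₁⟩, ⟨e₂⟩, ⟨e₃⟩⟩ := exists_glued_fiber adjC adjD hCD Hab Hq Hp
    obtain ⟨e₄⟩ := Hp.rightAdjoint_cone_iso adjR Hαβ
    refine ⟨A, B, f, q ≫ p, h, Hh, ⟨tC.ge_iso e₁.symm hP, tD.ge_iso e₂.symm hQ⟩,
      B⟦(1 : ℤ)⟧, ?_, ⟨(shiftEquiv ℰ (1 : ℤ)).unitIso.app B⟩⟩
    rintro Y ⟨hY₁, hY₂⟩ k
    rw [← (shiftFunctor ℰ (1 : ℤ)).map_preimage k]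
    suffices ∀ l : Y ⟶ B, l = 0 by
      rw [this ((shiftFunctor ℰ (1 : ℤ)).preimage k), Functor.map_zero]
    refine (tri Y).eq_zero_of_source (fun l => (adjC.homEquiv _ _).injective ?_)
      (fun l => (adjR.homEquiv _ _).injective ?_)
    · rw [← cancel_mono (e₃ ≪≫ eS).hom]
      exact (tC.eq_zero_of_ge_of_le hY₁ hS₀ _).trans (tC.eq_zero_of_ge_of_le hY₁ hS₀ _).symm
    · rw [← cancel_mono (e₄ ≪≫ eT).hom]
      exact (tD.eq_zero_of_ge_of_le hY₂ hT₀ _).trans (tD.eq_zero_of_ge_of_le hY₂ hT₀ _).symm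

end Gluing

section

universe v₁ u₁ v₂ u₂

variable (D : Type u₁) [Category.{v₁} D] [HasZeroObject D] [Preadditive D]
  [HasShift D ℤ] [∀ n : ℤ, (shiftFunctor D n).Additive] [Pretriangulated D]
  (E : Type u₂) [Category.{v₂} E] [HasZeroObject E] [Preadditive E]
  [HasShift E ℤ] [∀ n : ℤ, (shiftFunctor E n).Additive] [Pretriangulated E]

/-- Gluing of weight structures and adjacent t-structures along a split short exact
sequence `C ⇄ E ⇄ D` of stable categories.  Given weight structures on `C` and `D`
with `π₀Map_E(i_D X, i_C Y) = 0` for `X ∈ D_{w≤0}` and `Y ∈ Σ C_{w≥0}`, there is a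
unique weight structure on `E` making the four functors weight-exact; its
non-negative (resp. non-positive) part is the extension-closure of
`i_C(C_{w≥0}) ∪ i_D(D_{w≥0})` (resp. `i_C(C_{w≤0}) ∪ i_D(D_{w≤0})`).  Moreover if
`i_D` has a right adjoint and the weight structures on `C` and `D` admit adjacent
t-structures, then so does the glued weight structure on `E`. -/
theorem statement13
    (iC : C ⥤ E) (LC : E ⥤ C) (LD : E ⥤ D) (iD : D ⥤ E)
    [iC.CommShift ℤ] [iC.IsTriangulated] [LC.CommShift ℤ] [LC.IsTriangulated]
    [LD.CommShift ℤ] [LD.IsTriangulated] [iD.CommShift ℤ] [iD.IsTriangulated]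
    [iC.Full] [iC.Faithful] [iD.Full] [iD.Faithful]
    (adjC : iC ⊣ LC) (adjD : LD ⊣ iD)
    (horth : ∀ Y : E, iD.essImage Y ↔
      (∀ (c : C) (n : ℤ) (f : (iC.obj c)⟦n⟧ ⟶ Y), f = 0))
    (wC : WeightStructure C) (wD : WeightStructure D)
    (hw : ∀ (X : D) (Y : C), wD.le X → wC.ge Y →
      ∀ f : iD.obj X ⟶ (iC.obj Y)⟦(1 : ℤ)⟧, f = 0) :
    ∃ wE : WeightStructure E,
      (WeightExact C iC wC (wE.le, wE.ge) ∧ WeightExact D iD wD (wE.le, wE.ge) ∧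
        WeightExact E LC wE (wC.le, wC.ge) ∧ WeightExact E LD wE (wD.le, wD.ge)) ∧
      wE.ge = {X : E | ExtClosure E (iC.obj '' wC.ge ∪ iD.obj '' wD.ge) X} ∧
      wE.le = {X : E | ExtClosure E (iC.obj '' wC.le ∪ iD.obj '' wD.le) X} ∧
      (∀ wE' : WeightStructure E,
        (WeightExact C iC wC (wE'.le, wE'.ge) ∧ WeightExact D iD wD (wE'.le, wE'.ge) ∧
          WeightExact E LC wE' (wC.le, wC.ge) ∧ WeightExact E LD wE' (wD.le, wD.ge)) →
        wE' = wE) ∧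
      (∀ (RD : E ⥤ D), (iD ⊣ RD) →
        ∀ (tC : TStructure C) (tD : TStructure D),
          tC.ge = wC.ge → tD.ge = wD.ge →
          ∃ tE : TStructure E, tE.ge = wE.ge) := by
  have hCD (c : C) (d : D) (f : iC.obj c ⟶ iD.obj d) : f = 0 := by
    rw [← cancel_epi ((shiftFunctorZero E ℤ).hom.app (iC.obj c)), comp_zero]
    exact (horth _).1 (iD.obj_mem_essImage d) c 0 _
  have hess (Y : E) (hY : ∀ (c : C) (f : iC.obj c ⟶ Y), f = 0) : iD.essImage Y := by
    refine (horth Y).2 fun c n f => ?_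
    rw [← cancel_epi ((iC.commShiftIso n).hom.app c), comp_zero]
    exact hY _ _
  have tri := exactPair_counit_unit adjC adjD hCD hess
  obtain ⟨wE, hle, hge⟩ := exists_glued_weightStructure adjC adjD hCD hess wC wD hw
  have zC (d : D) := isZero_rightAdjoint_obj hCD adjC d
  have zD (c : C) := isZero_leftAdjoint_obj hCD adjD c
  have exC : WeightExact C iC wC (wE.le, wE.ge) :=
    ⟨fun X hX => (hle _).2 ⟨wC.le_iso (asIso (adjC.unit.app X)) hX, wD.le_of_isZero (zD X)⟩,
      fun X hX => (hge _).2 ⟨wC.ge_iso (asIso (adjC.unit.app X)) hX, wD.ge_of_isZero (zD X)⟩⟩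
  have exD : WeightExact D iD wD (wE.le, wE.ge) :=
    ⟨fun X hX => (hle _).2
        ⟨wC.le_of_isZero (zC X), wD.le_iso (asIso (adjD.counit.app X)).symm hX⟩,
      fun X hX => (hge _).2
        ⟨wC.ge_of_isZero (zC X), wD.ge_iso (asIso (adjD.counit.app X)).symm hX⟩⟩
  have ge_ext (X : E) (hX : wC.ge (LC.obj X) ∧ wD.ge (LD.obj X)) :
      ExtClosure E (iC.obj '' wC.ge ∪ iD.obj '' wD.ge) X := by
    obtain ⟨h, H⟩ := tri X
    exact .ext _ _ _ H (.of (.inl ⟨_, hX.1, rfl⟩)) (.of (.inr ⟨_, hX.2, rfl⟩))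
  have le_ext (X : E) (hX : wC.le (LC.obj X) ∧ wD.le (LD.obj X)) :
      ExtClosure E (iC.obj '' wC.le ∪ iD.obj '' wD.le) X := by
    obtain ⟨h, H⟩ := tri X
    exact .ext _ _ _ H (.of (.inl ⟨_, hX.1, rfl⟩)) (.of (.inr ⟨_, hX.2, rfl⟩))
  have ext_ge (w : WeightStructure E) (h₁ : WeightExact C iC wC (w.le, w.ge))
      (h₂ : WeightExact D iD wD (w.le, w.ge)) (X : E)
      (hX : ExtClosure E (iC.obj '' wC.ge ∪ iD.obj '' wD.ge) X) : w.ge X := by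
    refine w.ge_of_extClosure ?_ hX
    rintro _ (⟨Y, hY, rfl⟩ | ⟨Y, hY, rfl⟩)
    exacts [h₁.2 _ hY, h₂.2 _ hY]
  have ext_le (w : WeightStructure E) (h₁ : WeightExact C iC wC (w.le, w.ge))
      (h₂ : WeightExact D iD wD (w.le, w.ge)) (X : E)
      (hX : ExtClosure E (iC.obj '' wC.le ∪ iD.obj '' wD.le) X) : w.le X := by
    refine w.le_of_extClosure ?_ hX
    rintro _ (⟨Y, hY, rfl⟩ | ⟨Y, hY, rfl⟩)
    exacts [h₁.1 _ hY, h₂.1 _ hY]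
  refine ⟨wE, ⟨exC, exD, ⟨fun X hX => ((hle X).1 hX).1, fun X hX => ((hge X).1 hX).1⟩,
    ⟨fun X hX => ((hle X).1 hX).2, fun X hX => ((hge X).1 hX).2⟩⟩, ?_, ?_, ?_, ?_⟩
  · exact Set.ext fun X => ⟨fun hX => ge_ext X ((hge X).1 hX), ext_ge wE exC exD X⟩
  · exact Set.ext fun X => ⟨fun hX => le_ext X ((hle X).1 hX), ext_le wE exC exD X⟩
  · rintro w ⟨h₁, h₂, h₃, h₄⟩
    have hle' : w.le = wE.le := Set.ext fun X =>
      ⟨fun hX => (hle X).2 ⟨h₃.1 X hX, h₄.1 X hX⟩,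
        fun hX => ext_le w h₁ h₂ X (le_ext X ((hle X).1 hX))⟩
    have hge' : w.ge = wE.ge := Set.ext fun X =>
      ⟨fun hX => (hge X).2 ⟨h₃.2 X hX, h₄.2 X hX⟩,
        fun hX => ext_ge w h₁ h₂ X (ge_ext X ((hge X).1 hX))⟩
    cases w
    cases wE
    cases hle'
    cases hge'
    rfl
  · intro RD adjR tC tD hC hD
    let := adjR.rightAdjointCommShift ℤ
    have := adjR.commShift_of_leftAdjoint ℤ
    have := adjR.isTriangulated_rightAdjoint
    obtain ⟨t, ht⟩ := exists_glued_tStructure adjC adjD hCD hess adjR tC tD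
    refine ⟨t, Set.ext fun X => (ht X).trans ?_⟩
    rw [hC, hD]
    exact (hge X).symm

end
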